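/- arXiv:1903.02255 — 2 statements merged into one kernel-verified Lean document; each statement's English description precedes it below -/
import Mathlib

section
/- Singleton Bound via dual distance: for any code C ⊆ F_q^n with minimum distance d and dual distance d', we have q^{d'-1} ≤ |C| ≤ q^{n-d+1}. -/
open Finset

/-- Generalized binomial coefficient `C(z, j) = z(z-1)⋯(z-j+1)/j!` for real `z`. -/
noncomputable def realChoose (z : ℝ) (j : ℕ) : ℝ :=
  (∏ k ∈ Finset.range j, (z - k)) / (Nat.factorial j)

/-- The Krawtchouk polynomial `K_i^{(n,q)}(z)`. -/
noncomputable def kraw (n q i : ℕ) (z : ℝ) : ℝ :=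
  ∑ j ∈ Finset.range (i + 1),
    (-1 : ℝ) ^ j * ((q : ℝ) - 1) ^ (i - j) * (q : ℝ) ^ j *
      ((n - j).choose (n - i) : ℝ) * realChoose z j

/-- The distance distribution `B_i` of a code `C ⊆ F_q^n`. -/
noncomputable def distDistrib {n q : ℕ} (C : Finset (Fin n → Fin q)) (i : ℕ) : ℝ :=
  (((C ×ˢ C).filter (fun p => hammingDist p.1 p.2 = i)).card : ℝ) / (C.card : ℝ)

/-- The dual distance distribution (MacWilliams transform) `B'_i` of a code. -/
noncomputable def dualDistDistrib {n q : ℕ} (C : Finset (Fin n → Fin q)) (i : ℕ) : ℝ :=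
  (∑ j ∈ Finset.range (n + 1), distDistrib C j * kraw n q i j) / (C.card : ℝ)

theorem realChoose_natCast (z j : ℕ) : realChoose (z : ℝ) j = (z.choose j : ℝ) := by
  have h : ∀ j : ℕ, (∏ k ∈ Finset.range j, ((z : ℝ) - k)) = (z.descFactorial j : ℝ) := by
    intro j
    induction j with
    | zero => simp
    | succ k ih =>
      rw [Finset.prod_range_succ, ih, Nat.descFactorial_succ]
      by_cases hk : k ≤ z
      · push_cast [Nat.cast_sub hk]; ring
      · have : z.descFactorial k = 0 := by
          rw [Nat.descFactorial_eq_zero_iff_lt]; omega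
        simp [this]
  unfold realChoose
  rw [h, Nat.descFactorial_eq_factorial_mul_choose]
  have : (Nat.factorial j : ℝ) ≠ 0 := by exact_mod_cast Nat.factorial_ne_zero j
  push_cast
  field_simp

theorem alt_sum (m z : ℕ) : ∀ t : ℕ, z ≤ m + t →
    ∑ j ∈ Finset.range (t + 1), (-1 : ℝ) ^ j * ((m + t - j).choose m : ℝ) * (z.choose j : ℝ)
      = ((m + t - z).choose t : ℝ) := by
  induction z with
  | zero =>
    intro t _
    rw [Finset.sum_range_succ']
    simp only [Nat.choose_zero_succ, Nat.choose_zero_right]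
    simp
    exact_mod_cast Nat.choose_symm_add
  | succ z ih =>
    intro t ht
    cases t with
    | zero => simp
    | succ t =>
      have h1 := ih (t + 1) (by omega)
      have h2 := ih t (by omega)
      rw [Finset.sum_range_succ'] at h1 ⊢
      have e : ∀ j ∈ Finset.range (t + 1),
          (-1 : ℝ) ^ (j + 1) * ((m + (t + 1) - (j + 1)).choose m : ℝ) * ((z + 1).choose (j + 1) : ℝ)
          = (-1 : ℝ) ^ (j + 1) * ((m + (t + 1) - (j + 1)).choose m : ℝ) * (z.choose (j + 1) : ℝ)
            - (-1 : ℝ) ^ j * ((m + t - j).choose m : ℝ) * (z.choose j : ℝ) := by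
        intro j _
        rw [Nat.choose_succ_succ, show m + (t + 1) - (j + 1) = m + t - j by omega]
        push_cast
        ring
      rw [Finset.sum_congr rfl e, Finset.sum_sub_distrib, h2]
      have e3 : ((m + (t + 1) - z).choose (t + 1) : ℝ)
          = ((m + t - z).choose t : ℝ) + ((m + t - z).choose (t + 1) : ℝ) := by
        rw [show m + (t + 1) - z = (m + t - z) + 1 by omega, Nat.choose_succ_succ]
        push_cast; ring
      rw [e3] at h1
      rw [show m + (t + 1) - (z + 1) = m + t - z by omega]
      simp only [Nat.choose_zero_right] at h1 ⊢
      linarith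

theorem krawInner_sum (m s : ℕ) (x : ℝ) :
    ∑ k ∈ Finset.range (s + 1), ((m + s - k).choose m : ℝ) * (x - 1) ^ k *
      ((m + s).choose (m + s - k) : ℝ) = ((m + s).choose m : ℝ) * x ^ s := by
  have h := add_pow (x - 1) 1 s
  rw [sub_add_cancel] at h
  rw [h, Finset.mul_sum]
  refine Finset.sum_congr rfl fun k hk => ?_
  have hk : k ≤ s := by simpa [Nat.lt_succ_iff] using hk
  have h2 : (m + s).choose (m + s - k) * (m + s - k).choose m
      = (m + s).choose m * s.choose k := by
    rw [Nat.choose_mul (by omega)]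
    rw [show m + s - m = s by omega, show m + s - k - m = s - k by omega, Nat.choose_symm hk]
  have h3 : ((m + s).choose (m + s - k) : ℝ) * ((m + s - k).choose m : ℝ)
      = ((m + s).choose m : ℝ) * (s.choose k : ℝ) := by exact_mod_cast h2
  rw [one_pow]
  linear_combination (x - 1) ^ k * h3

theorem kraw_sum (m t q z : ℕ) (hz : z ≤ m + t) :
    ∑ i ∈ Finset.range (t + 1), ((m + t - i).choose m : ℝ) * kraw (m + t) q i z
      = (q : ℝ) ^ t * ((m + t - z).choose t : ℝ) := by
  unfold kraw
  simp only [realChoose_natCast, Finset.mul_sum]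
  rw [Finset.sum_comm' (t' := Finset.range (t + 1)) (s' := fun j => Finset.Ico j (t + 1))
    (by intro x y; simp only [Finset.mem_range, Finset.mem_Ico]; omega)]
  rw [← alt_sum m z t hz, Finset.mul_sum]
  refine Finset.sum_congr rfl fun j hj => ?_
  obtain ⟨s, rfl⟩ : ∃ s, t = j + s := ⟨t - j, by have := Finset.mem_range.1 hj; omega⟩
  rw [Finset.sum_Ico_eq_sum_range, show j + s + 1 - j = s + 1 by omega]
  have h := krawInner_sum m s q
  rw [show m + (j + s) - j = m + s by omega]
  calc _ = (∑ k ∈ Finset.range (s + 1), ((m + s - k).choose m : ℝ) * ((q : ℝ) - 1) ^ k *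
      ((m + s).choose (m + s - k) : ℝ)) * ((-1 : ℝ) ^ j * (q : ℝ) ^ j * (z.choose j : ℝ)) := by
        rw [Finset.sum_mul]
        refine Finset.sum_congr rfl fun k hk => ?_
        rw [show m + (j + s) - (j + k) = m + s - k by omega, show j + k - j = k by omega]
        ring
    _ = _ := by rw [h, pow_add]; ring

theorem kraw_big (n q i z : ℕ) (hz : z ≤ n) (hi : n ≤ i) :
    kraw n q i z = ((q : ℝ) - 1) ^ (i - n) * kraw n q n z := by
  unfold kraw
  simp only [realChoose_natCast, Finset.mul_sum]
  have hsub : Finset.range (n + 1) ⊆ Finset.range (i + 1) :=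
    Finset.range_subset_range.2 (by omega)
  rw [← Finset.sum_subset hsub]
  · refine Finset.sum_congr rfl fun j hj => ?_
    have : j ≤ n := by have := Finset.mem_range.1 hj; omega
    rw [show n - i = n - n by omega, show i - j = (i - n) + (n - j) by omega, pow_add]
    ring
  · intro j _ hj
    have : z < j := by simp at hj; omega
    simp [Nat.choose_eq_zero_of_lt this]

theorem dual_big {n q : ℕ} (C : Finset (Fin n → Fin q)) (i : ℕ) (hi : n ≤ i) :
    dualDistDistrib C i = ((q : ℝ) - 1) ^ (i - n) * dualDistDistrib C n := by
  unfold dualDistDistrib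
  rw [← mul_div_assoc, Finset.mul_sum]
  congr 1
  refine Finset.sum_congr rfl fun j hj => ?_
  rw [kraw_big n q i j (by have := Finset.mem_range.1 hj; omega) hi]
  ring

theorem distDistrib_zero {n q : ℕ} (C : Finset (Fin n → Fin q)) (hC : C.Nonempty) :
    distDistrib C 0 = 1 := by
  unfold distDistrib
  have : (C ×ˢ C).filter (fun p => hammingDist p.1 p.2 = 0) = C.diag := by
    ext ⟨a, b⟩
    simp only [Finset.mem_filter, Finset.mem_product, Finset.mem_diag, hammingDist_eq_zero]
    constructor
    · rintro ⟨⟨h1, h2⟩, h3⟩; exact ⟨h1, h3⟩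
    · rintro ⟨h1, h3⟩; exact ⟨⟨h1, h3 ▸ h1⟩, h3⟩
  rw [this, Finset.diag_card]
  exact div_self (by exact_mod_cast hC.card_ne_zero)

theorem distDistrib_sum {n q : ℕ} (C : Finset (Fin n → Fin q)) (hC : C.Nonempty) :
    ∑ j ∈ Finset.range (n + 1), distDistrib C j = C.card := by
  unfold distDistrib
  rw [← Finset.sum_div]
  have h := Finset.card_eq_sum_card_fiberwise (s := C ×ˢ C) (t := Finset.range (n + 1))
    (f := fun p => hammingDist p.1 p.2) (by
      intro p _
      have := hammingDist_le_card_fintype (x := p.1) (y := p.2)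
      simp only [Fintype.card_fin] at this
      simp only [Finset.coe_range, Set.mem_Iio]
      omega)
  have h' : ∑ j ∈ Finset.range (n + 1),
      ((((C ×ˢ C).filter (fun p => hammingDist p.1 p.2 = j)).card : ℕ) : ℝ)
      = (C.card : ℝ) * C.card := by
    rw [Finset.card_product] at h
    exact_mod_cast h.symm
  rw [h']
  have : (C.card : ℝ) ≠ 0 := by exact_mod_cast hC.card_ne_zero
  field_simp

theorem dual_zero {n q : ℕ} (C : Finset (Fin n → Fin q)) (hC : C.Nonempty) :
    dualDistDistrib C 0 = 1 := by
  unfold dualDistDistrib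
  have : ∀ z : ℝ, kraw n q 0 z = 1 := by intro z; simp [kraw, realChoose]
  simp only [this, mul_one]
  rw [distDistrib_sum C hC]
  exact div_self (by exact_mod_cast hC.card_ne_zero)

theorem lower_bound {m t n q : ℕ} (hn : n = m + t) (C : Finset (Fin n → Fin q))
    (hC : C.Nonempty) (h0 : ∀ i : ℕ, 1 ≤ i → i ≤ t → dualDistDistrib C i = 0) :
    q ^ t ≤ C.card := by
  have hc : (0 : ℝ) < C.card := by exact_mod_cast hC.card_pos
  have key : ∑ i ∈ Finset.range (t + 1), ((m + t - i).choose m : ℝ) * dualDistDistrib C i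
      = (∑ j ∈ Finset.range (n + 1), distDistrib C j * ((q : ℝ) ^ t * ((m + t - j).choose t : ℝ)))
        / C.card := by
    unfold dualDistDistrib
    simp only [← mul_div_assoc, ← Finset.sum_div, Finset.mul_sum]
    rw [Finset.sum_comm]
    congr 1
    refine Finset.sum_congr rfl fun j hj => ?_
    rw [← kraw_sum m t q j (by have := Finset.mem_range.1 hj; omega), Finset.mul_sum]
    refine Finset.sum_congr rfl fun i _ => ?_
    rw [← hn]
    ring
  have hl : ∑ i ∈ Finset.range (t + 1), ((m + t - i).choose m : ℝ) * dualDistDistrib C i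
      = ((m + t).choose t : ℝ) := by
    rw [Finset.sum_range_succ', Finset.sum_eq_zero, dual_zero C hC]
    · simp
      exact_mod_cast Nat.choose_symm_add
    · intro i hi
      rw [h0 (i + 1) (by omega) (by have := Finset.mem_range.1 hi; omega), mul_zero]
  have hr : (q : ℝ) ^ t * ((m + t).choose t : ℝ) ≤
      ∑ j ∈ Finset.range (n + 1), distDistrib C j * ((q : ℝ) ^ t * ((m + t - j).choose t : ℝ)) := by
    have := Finset.single_le_sum (s := Finset.range (n + 1))
      (f := fun j => distDistrib C j * ((q : ℝ) ^ t * ((m + t - j).choose t : ℝ)))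
      (fun j _ => by unfold distDistrib; positivity) (Finset.mem_range.2 (Nat.succ_pos n))
    simpa [distDistrib_zero C hC] using this
  rw [hl, eq_div_iff hc.ne'] at key
  rw [← key] at hr
  have hp : (0 : ℝ) < ((m + t).choose t : ℝ) := by
    exact_mod_cast Nat.choose_pos (by omega)
  have : (q : ℝ) ^ t ≤ C.card := by
    rw [mul_comm] at hr
    exact le_of_mul_le_mul_left hr hp
  exact_mod_cast this

theorem upper_bound {n q d : ℕ} (C : Finset (Fin n → Fin q)) (hd1 : 1 ≤ d) (hdn : d ≤ n)
    (hd_le : ∀ x ∈ C, ∀ y ∈ C, x ≠ y → d ≤ hammingDist x y) :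
    C.card ≤ q ^ (n - d + 1) := by
  have hk : n - d + 1 ≤ n := by omega
  have h := Finset.card_le_card_of_injOn (s := C)
    (t := (Finset.univ : Finset (Fin (n - d + 1) → Fin q)))
    (fun x i => x (Fin.castLE hk i)) (fun _ _ => Finset.mem_coe.2 (Finset.mem_univ _)) (by
      intro x hx y hy hxy
      by_contra hne
      have h1 := hd_le x hx y hy hne
      have h2 : Finset.univ.filter (fun i => x i ≠ y i)
          ⊆ (Finset.univ.image (Fin.castLE hk))ᶜ := by
        intro i hi
        simp only [Finset.mem_filter, Finset.mem_univ, true_and] at hi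
        simp only [Finset.mem_compl, Finset.mem_image, Finset.mem_univ, true_and]
        rintro ⟨j, rfl⟩
        exact hi (congrFun hxy j)
      have h3 := Finset.card_le_card h2
      rw [Finset.card_compl, Finset.card_image_of_injective _ (Fin.castLE_injective hk)] at h3
      simp only [Fintype.card_fin, Finset.card_univ] at h3
      have h4 : hammingDist x y ≤ n - (n - d + 1) := h3
      omega)
  simpa using h

theorem singleton_bound_with_dual (n q d d' : ℕ) (hn : 1 ≤ n) (hq : 2 ≤ q)
    (C : Finset (Fin n → Fin q)) (hC : 2 ≤ C.card)
    -- `d` is the minimum distance of `C`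
    (hd_le : ∀ x ∈ C, ∀ y ∈ C, x ≠ y → d ≤ hammingDist x y)
    (hd_ex : ∃ x ∈ C, ∃ y ∈ C, x ≠ y ∧ hammingDist x y = d)
    -- `d'` is the dual distance of `C`
    (hd'1 : 1 ≤ d') (hd'ne : dualDistDistrib C d' ≠ 0)
    (hd'min : ∀ i : ℕ, 1 ≤ i → i < d' → dualDistDistrib C i = 0) :
    q ^ (d' - 1) ≤ C.card ∧ C.card ≤ q ^ (n - d + 1) := by
  have hne : C.Nonempty := Finset.card_pos.1 (by omega)
  constructor
  · have hd'n : d' ≤ n := by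
      by_contra hlt
      apply hd'ne
      rw [dual_big C d' (by omega), hd'min n hn (by omega), mul_zero]
    exact lower_bound (m := n - (d' - 1)) (t := d' - 1) (by omega) C hne
      (fun i h1 h2 => hd'min i h1 (by omega))
  · obtain ⟨x, _, y, _, hxy, hxd⟩ := hd_ex
    have h1 : 0 < hammingDist x y := hammingDist_pos.2 hxy
    have h2 := hammingDist_le_card_fintype (x := x) (y := y)
    simp only [Fintype.card_fin] at h2
    exact upper_bound C (by omega) (by omega) hd_le
end

section
/- LP bound for spherical designs: let n ≥ 2, τ ≥ 1, and f a real polynomial with f(t) ≥ 0 on [-1,1] and Gegenbauer expansion f = Σ f_i P_i^{(n)} with f_0 > 0 and f_i ≤ 0 for i > τ. Then every spherical τ-design C ⊂ S^{n-1} satisfies |C| ≥ f(1)/f_0. -/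
open Finset

/-- The Gegenbauer polynomials `P_i^{(n)}(t)` normalized by `P_i^{(n)}(1) = 1`,
defined by the recurrence `(i+n-2) P_{i+1} = (2i+n-2) t P_i - i P_{i-1}`. -/
noncomputable def geg (n : ℕ) : ℕ → ℝ → ℝ
  | 0, _ => 1
  | 1, t => t
  | (i + 2), t =>
      ((2 * ((i : ℝ) + 1) + (n : ℝ) - 2) * t * geg n (i + 1) t
        - ((i : ℝ) + 1) * geg n i t) / (((i : ℝ) + 1) + (n : ℝ) - 2)

open MeasureTheory

/-- The normalized surface measure on the unit sphere of `EuclideanSpace ℝ (Fin n)`. -/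
noncomputable def sphereMeasure (n : ℕ) :
    Measure (Metric.sphere (0 : EuclideanSpace ℝ (Fin n)) 1) :=
  ((volume : Measure (EuclideanSpace ℝ (Fin n))).toSphere Set.univ)⁻¹ •
    (volume : Measure (EuclideanSpace ℝ (Fin n))).toSphere

/-- `C` is a spherical `τ`-design: averages of polynomials of degree at most `τ`
over `C` agree with their integrals with respect to the normalized surface measure. -/
def IsSphericalDesign (n τ : ℕ) (C : Finset (Metric.sphere (0 : EuclideanSpace ℝ (Fin n)) 1)) :
    Prop :=
  ∀ p : MvPolynomial (Fin n) ℝ, p.totalDegree ≤ τ →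
    (∑ x ∈ C, MvPolynomial.eval (fun i => (x : EuclideanSpace ℝ (Fin n)) i) p) / (C.card : ℝ) =
      ∫ x, MvPolynomial.eval (fun i => (x : EuclideanSpace ℝ (Fin n)) i) p ∂(sphereMeasure n)

open scoped RealInnerProductSpace


namespace LPB
open MvPolynomial

variable {n : ℕ}

noncomputable def sP (x : Fin n → ℝ) : MvPolynomial (Fin n) ℝ := ∑ j, C (x j) * X j
noncomputable def rP (n : ℕ) : MvPolynomial (Fin n) ℝ := ∑ j, X j ^ 2
noncomputable def dX (x : Fin n → ℝ) (p : MvPolynomial (Fin n) ℝ) : MvPolynomial (Fin n) ℝ :=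
  ∑ j, C (x j) * pderiv j p
noncomputable def lap (p : MvPolynomial (Fin n) ℝ) : MvPolynomial (Fin n) ℝ :=
  ∑ j, pderiv j (pderiv j p)

noncomputable def Z (n : ℕ) (x : Fin n → ℝ) : ℕ → MvPolynomial (Fin n) ℝ
  | 0 => 1
  | 1 => sP x
  | (i + 2) => C (((i : ℝ) + 1 + n - 2)⁻¹) *
      (C (2 * ((i : ℝ) + 1) + n - 2) * (sP x * Z n x (i + 1)) - C ((i : ℝ) + 1) * (rP n * Z n x i))

lemma pd_comm (i j : Fin n) (p : MvPolynomial (Fin n) ℝ) :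
    pderiv i (pderiv j p) = pderiv j (pderiv i p) := by
  ext m
  simp only [coeff_pderiv]
  rcases eq_or_ne i j with rfl | h
  · rfl
  · simp only [Finsupp.add_apply, Finsupp.single_eq_of_ne h, Finsupp.single_eq_of_ne h.symm, add_zero]
    rw [add_right_comm]; ring

lemma pd_s (x : Fin n → ℝ) (j : Fin n) : pderiv j (sP x) = C (x j) := by
  classical
  simp [sP, pderiv_X, Pi.single_apply]

lemma pd_r (j : Fin n) : pderiv j (rP n) = 2 * X j := by
  classical
  simp [rP, pderiv_X, Pi.single_apply]

lemma dX_mul (x : Fin n → ℝ) (p q) : dX x (p * q) = dX x p * q + p * dX x q := by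
  simp only [dX, pderiv_mul, Finset.sum_mul, Finset.mul_sum, ← Finset.sum_add_distrib]
  exact Finset.sum_congr rfl fun j _ => by ring

lemma dX_C_mul (x : Fin n → ℝ) (a : ℝ) (q) : dX x (C a * q) = C a * dX x q := by
  rw [dX_mul]; simp [dX]

lemma dX_sub (x : Fin n → ℝ) (p q) : dX x (p - q) = dX x p - dX x q := by
  simp [dX, mul_sub]

lemma lap_C_mul (a : ℝ) (q : MvPolynomial (Fin n) ℝ) : lap (C a * q) = C a * lap q := by
  simp [lap, Finset.mul_sum]

lemma lap_sub (p q : MvPolynomial (Fin n) ℝ) : lap (p - q) = lap p - lap q := by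
  simp [lap]

lemma lap_sum {ι : Type*} (s : Finset ι) (p : ι → MvPolynomial (Fin n) ℝ) :
    lap (∑ i ∈ s, p i) = ∑ i ∈ s, lap (p i) := by
  simp only [lap, map_sum]
  rw [Finset.sum_comm]

lemma dX_s (x : Fin n → ℝ) (hx : ∑ j, x j ^ 2 = 1) : dX x (sP x) = 1 := by
  have : dX x (sP x) = C (∑ j, x j ^ 2) := by
    simp [dX, pd_s, pow_two]
  rw [this, hx, C_1]

lemma dX_r (x : Fin n → ℝ) : dX x (rP n) = 2 * sP x := by
  simp only [dX, pd_r, sP, Finset.mul_sum]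
  exact Finset.sum_congr rfl fun j _ => by ring

lemma lap_s_mul (x : Fin n → ℝ) (p) : lap (sP x * p) = sP x * lap p + 2 * dX x p := by
  simp only [lap, dX, pderiv_mul, pd_s, map_add, pderiv_C, Finset.mul_sum, ← Finset.sum_add_distrib]
  exact Finset.sum_congr rfl fun j _ => by ring

lemma lap_r_mul (p : MvPolynomial (Fin n) ℝ) :
    lap (rP n * p) = rP n * lap p + 4 * (∑ j, X j * pderiv j p) + 2 * (n : MvPolynomial (Fin n) ℝ) * p := by
  have h : (2 * (n : MvPolynomial (Fin n) ℝ) * p) = ∑ j : Fin n, 2 * p := by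
    simp; ring
  rw [h]
  simp only [lap, pderiv_mul, pd_r, map_add, Finset.mul_sum, ← Finset.sum_add_distrib]
  refine Finset.sum_congr rfl fun j _ => ?_
  have h2 : pderiv j (2 : MvPolynomial (Fin n) ℝ) = 0 := by
    exact pderiv_C (R := ℝ) (σ := Fin n) (a := 2) (i := j)
  rw [h2, pderiv_X_self]
  ring

lemma dX_lap (x : Fin n → ℝ) (p) : lap (dX x p) = dX x (lap p) := by
  simp only [lap, dX, map_sum, pderiv_C_mul, Finset.mul_sum]
  rw [Finset.sum_comm]
  refine Finset.sum_congr rfl fun j _ => Finset.sum_congr rfl fun k _ => ?_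
  rw [pd_comm k j, pd_comm k j]

lemma hom_s (x : Fin n → ℝ) : (sP x).IsHomogeneous 1 := by
  refine IsHomogeneous.sum _ _ _ fun j _ => ?_
  simpa using (isHomogeneous_C (Fin n) (x j)).mul (isHomogeneous_X ℝ j)

lemma hom_r : (rP n).IsHomogeneous 2 := by
  refine IsHomogeneous.sum _ _ _ fun j _ => ?_
  simpa using (isHomogeneous_X ℝ j).pow 2

lemma hom_C_mul {a : ℝ} {k : ℕ} {p : MvPolynomial (Fin n) ℝ} (h : p.IsHomogeneous k) :
    (C a * p).IsHomogeneous k := by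
  simpa using (isHomogeneous_C (Fin n) a).mul h

lemma hom_dX (x : Fin n → ℝ) {k : ℕ} {p : MvPolynomial (Fin n) ℝ} (h : p.IsHomogeneous (k + 1)) :
    (dX x p).IsHomogeneous k :=
  IsHomogeneous.sum _ _ _ fun j _ => hom_C_mul (by simpa using h.pderiv)

lemma hom_Z (x : Fin n → ℝ) : ∀ i, (Z n x i).IsHomogeneous i
  | 0 => isHomogeneous_one _ _
  | 1 => hom_s x
  | (i + 2) => by
    rw [Z]
    refine hom_C_mul (IsHomogeneous.sub (hom_C_mul ?_) (hom_C_mul ?_))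
    · have := (hom_s x).mul (hom_Z x (i + 1))
      convert this using 1; ring
    · have := (hom_r).mul (hom_Z x i)
      convert this using 1; ring

lemma Z_rec (hn : 2 ≤ n) (x : Fin n → ℝ) (i : ℕ) :
    C ((i : ℝ) + n - 1) * Z n x (i + 2) =
      C (2 * (i : ℝ) + n) * (sP x * Z n x (i + 1)) - C ((i : ℝ) + 1) * (rP n * Z n x i) := by
  have h : ((i : ℝ) + n - 1) ≠ 0 := by
    have : (2 : ℝ) ≤ n := by exact_mod_cast hn
    have : (0 : ℝ) ≤ i := by positivity
    linarith
  have e1 : (i : ℝ) + 1 + n - 2 = i + n - 1 := by ring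
  have e2 : 2 * ((i : ℝ) + 1) + n - 2 = 2 * i + n := by ring
  rw [Z, e1, e2, ← mul_assoc, ← C_mul, mul_inv_cancel₀ h, C_1, one_mul]

lemma C_cancel {a : ℝ} (h : a ≠ 0) {p q : MvPolynomial (Fin n) ℝ} (e : C a * p = C a * q) : p = q :=
  mul_left_cancel₀ (by simpa using h) e

lemma pos_aux (hn : 2 ≤ n) (i : ℕ) : (0 : ℝ) < (i : ℝ) + n - 1 := by
  have : (2 : ℝ) ≤ n := by exact_mod_cast hn
  have : (0 : ℝ) ≤ i := by positivity
  linarith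

lemma dX_Z (hn : 2 ≤ n) (x : Fin n → ℝ) (hx : ∑ j, x j ^ 2 = 1) :
    ∀ i, dX x (Z n x (i + 1)) = C ((i : ℝ) + 1) * Z n x i
  | 0 => by simp [Z, dX_s x hx]
  | 1 => by
    apply C_cancel (pos_aux hn 0).ne'
    have := Z_rec hn x 0
    rw [← dX_C_mul, this]
    simp only [dX_sub, dX_C_mul]
    simp only [dX_mul, dX_s x hx, dX_r, Z]
    have : dX x (1 : MvPolynomial (Fin n) ℝ) = 0 := by simp [dX]
    rw [this]
    simp only [map_sub, map_add, map_mul, map_natCast, map_one, map_ofNat]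
    push_cast
    ring
  | (i + 2) => by
    apply C_cancel (pos_aux hn (i + 1)).ne'
    have h0 := Z_rec hn x i
    have h1 := Z_rec hn x (i + 1)
    rw [← dX_C_mul, h1]
    simp only [dX_sub, dX_C_mul]
    simp only [dX_mul, dX_s x hx, dX_r]
    have d1 := dX_Z hn x hx i
    have d2 := dX_Z hn x hx (i + 1)
    rw [d1, d2]
    simp only [map_sub, map_add, map_mul, map_natCast, map_one, map_ofNat] at h0 h1 ⊢
    push_cast at h0 h1 ⊢
    linear_combination (-(i : MvPolynomial (Fin n) ℝ) - 2) * h0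

lemma lap_Z (hn : 2 ≤ n) (x : Fin n → ℝ) (hx : ∑ j, x j ^ 2 = 1) :
    ∀ i, lap (Z n x i) = 0
  | 0 => by simp [Z, lap]
  | 1 => by simp [Z, lap, pd_s]
  | (i + 2) => by
    apply C_cancel (pos_aux hn i).ne'
    rw [← lap_C_mul, Z_rec hn, lap_sub, lap_C_mul, lap_C_mul, lap_s_mul, lap_r_mul,
      lap_Z hn x hx (i + 1), lap_Z hn x hx i, dX_Z hn x hx, (hom_Z x i).sum_X_mul_pderiv]
    simp only [map_sub, map_add, map_mul, map_natCast, map_one, map_ofNat, nsmul_eq_mul]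
    ring

lemma eval_dX (x : Fin n → ℝ) {k : ℕ} {p : MvPolynomial (Fin n) ℝ} (h : p.IsHomogeneous k) :
    eval x (dX x p) = k * eval x p := by
  have := congrArg (eval x) h.sum_X_mul_pderiv
  simpa [dX] using this

lemma eval_Z (x y : Fin n → ℝ) (hy : ∑ j, y j ^ 2 = 1) :
    ∀ i, eval y (Z n x i) = geg n i (∑ j, x j * y j)
  | 0 => by simp [Z, geg]
  | 1 => by simp [Z, geg, sP]
  | (i + 2) => by
    have hs : eval y (sP x) = ∑ j, x j * y j := by simp [sP]
    have hr : eval y (rP n) = 1 := by simp [rP, hy]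
    rw [Z, geg]
    simp only [map_mul, map_sub, eval_C, hs, hr, eval_Z x y hy (i + 1), eval_Z x y hy i]
    ring

/-! Fischer pairing -/
noncomputable def fac (m : Fin n →₀ ℕ) : ℝ := ∏ j, ((m j).factorial : ℝ)

lemma fac_nonneg (m : Fin n →₀ ℕ) : 0 ≤ fac m := Finset.prod_nonneg fun _ _ => by positivity

lemma fac_succ (m : Fin n →₀ ℕ) (j : Fin n) :
    fac (m + Finsupp.single j 1) = (m j + 1) * fac m := by
  classical
  unfold fac
  rw [← Finset.mul_prod_erase _ _ (Finset.mem_univ j), ← Finset.mul_prod_erase _ (fun j => ((m j).factorial : ℝ)) (Finset.mem_univ j)]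
  rw [← mul_assoc]
  congr 1
  · simp [Nat.factorial_succ]
  · refine Finset.prod_congr rfl fun k hk => ?_
    rw [Finsupp.add_apply, Finsupp.single_eq_of_ne (Finset.ne_of_mem_erase hk), add_zero]

noncomputable def B (q : MvPolynomial (Fin n) ℝ) : MvPolynomial (Fin n) ℝ →ₗ[ℝ] ℝ :=
  (basisMonomials (Fin n) ℝ).constr ℝ fun m => fac m * coeff m q

lemma B_mon (q : MvPolynomial (Fin n) ℝ) (m) : B q (monomial m 1) = fac m * coeff m q := by
  have := (basisMonomials (Fin n) ℝ).constr_basis ℝ (fun m => fac m * coeff m q) m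
  simpa [B] using this

lemma B_nonneg (q : MvPolynomial (Fin n) ℝ) : 0 ≤ B q q := by
  have h : B q q = ∑ m ∈ q.support, coeff m q * (fac m * coeff m q) := by
    conv_lhs => arg 2; rw [q.as_sum]
    rw [map_sum]
    refine Finset.sum_congr rfl fun m _ => ?_
    rw [← B_mon, ← smul_eq_mul, ← map_smul, smul_monomial, smul_eq_mul, mul_one]
  rw [h]
  refine Finset.sum_nonneg fun m _ => ?_
  have := mul_nonneg (fac_nonneg m) (mul_self_nonneg (coeff m q))
  linarith

lemma B_X (q p : MvPolynomial (Fin n) ℝ) (j : Fin n) : B q (X j * p) = B (pderiv j q) p := by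
  have : B q ∘ₗ LinearMap.mulLeft ℝ (X j) = B (pderiv j q) := by
    refine (basisMonomials (Fin n) ℝ).ext fun m => ?_
    simp only [coe_basisMonomials, LinearMap.comp_apply, LinearMap.mulLeft_apply, B_mon, coeff_pderiv]
    rw [X, monomial_mul, one_mul, B_mon, add_comm, fac_succ]
    ring
  exact LinearMap.congr_fun this p

lemma B_add (q q' p : MvPolynomial (Fin n) ℝ) : B (q + q') p = B q p + B q' p := by
  have : B (q + q') = B q + B q' := by
    refine (basisMonomials (Fin n) ℝ).ext fun m => ?_
    simp only [coe_basisMonomials, LinearMap.add_apply, B_mon, coeff_add]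
    ring
  rw [this]; rfl

lemma B_C_mul (a : ℝ) (q p : MvPolynomial (Fin n) ℝ) : B (C a * q) p = a * B q p := by
  have : B (C a * q) = a • B q := by
    refine (basisMonomials (Fin n) ℝ).ext fun m => ?_
    simp only [coe_basisMonomials, LinearMap.smul_apply, B_mon, coeff_C_mul, smul_eq_mul]
    ring
  rw [this]; rfl

lemma B_zero (p : MvPolynomial (Fin n) ℝ) : B 0 p = 0 := by
  have := B_C_mul 0 0 p
  simpa using this

lemma B_sum {ι : Type*} (s : Finset ι) (f : ι → MvPolynomial (Fin n) ℝ) (p) :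
    B (∑ i ∈ s, f i) p = ∑ i ∈ s, B (f i) p := by
  classical
  induction s using Finset.induction_on with
  | empty => simp [B_zero]
  | insert a s ha ih => rw [Finset.sum_insert ha, Finset.sum_insert ha, B_add, ih]

lemma B_C_mul' (a : ℝ) (q p : MvPolynomial (Fin n) ℝ) : B q (C a * p) = a * B q p := by
  rw [C_mul', map_smul, smul_eq_mul]

lemma B_s (x : Fin n → ℝ) (q p) : B q (sP x * p) = B (dX x q) p := by
  simp only [sP, dX, Finset.sum_mul, map_sum, B_sum, B_C_mul, mul_assoc, B_C_mul', B_X]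

lemma B_r (q p : MvPolynomial (Fin n) ℝ) : B q (rP n * p) = B (lap q) p := by
  simp only [rP, lap, Finset.sum_mul, map_sum, B_sum, pow_two, mul_assoc, B_X]

lemma repro (hn : 2 ≤ n) : ∀ i : ℕ, ∃ κ : ℝ, 0 < κ ∧ ∀ x : Fin n → ℝ, 
    ∀ h : MvPolynomial (Fin n) ℝ, h.IsHomogeneous i → lap h = 0 → B h (Z n x i) = κ * eval x h
  | 0 => by
    refine ⟨1, one_pos, fun x h hh _ => ?_⟩
    have h1 : B h 1 = fac 0 * coeff 0 h := B_mon h 0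
    have h2 : h = C (coeff 0 h) := by
      rw [← totalDegree_eq_zero_iff_eq_C]
      exact Nat.le_zero.1 hh.totalDegree_le
    rw [Z, h1]
    conv_rhs => rw [h2]
    simp [fac]
  | 1 => by
    refine ⟨1, one_pos, fun x h hh hl => ?_⟩
    have h1 : B (dX x h) 1 = fac 0 * coeff 0 (dX x h) := B_mon _ 0
    have h2 : dX x h = C (coeff 0 (dX x h)) := by
      rw [← totalDegree_eq_zero_iff_eq_C]
      exact Nat.le_zero.1 (hom_dX (k := 0) x hh).totalDegree_le
    have h3 := eval_dX x hh
    rw [h2] at h3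
    rw [Z, ← mul_one (sP x), B_s, h1]
    simp at h3
    simp [fac, h3]
  | (i + 2) => by
    obtain ⟨κ, hκ, H⟩ := repro hn (i + 1)
    have hp := pos_aux hn i
    have h2 : (0 : ℝ) < 2 * i + n := by
      have : (2 : ℝ) ≤ n := by exact_mod_cast hn
      positivity
    refine ⟨(2 * i + n) * κ * (i + 2) / (i + n - 1), by positivity, fun x h hh hl => ?_⟩
    have h3 := congrArg (B h) (Z_rec hn x i)
    rw [map_sub (B h), B_C_mul', B_C_mul', B_C_mul', B_s, B_r, hl, B_zero,
      H x _ (hom_dX x hh) (by rw [dX_lap, hl]; simp [dX]), eval_dX x hh] at h3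
    push_cast at h3
    field_simp
    linarith

lemma posdef (hn : 2 ≤ n) (i : ℕ) {ι : Type*} (s : Finset ι) (v : ι → Fin n → ℝ)
    (hv : ∀ a, ∑ j, v a j ^ 2 = 1) :
    0 ≤ ∑ a ∈ s, ∑ b ∈ s, geg n i (∑ j, v a j * v b j) := by
  obtain ⟨κ, hκ, H⟩ := repro hn i
  set h := ∑ a ∈ s, Z n (v a) i with hh
  have hhom : h.IsHomogeneous i := IsHomogeneous.sum _ _ _ fun a _ => hom_Z _ _
  have hl : lap h = 0 := by
    rw [hh, lap_sum]; exact Finset.sum_eq_zero fun a _ => lap_Z hn _ (hv a) i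
  have h1 : B h h = κ * ∑ a ∈ s, ∑ b ∈ s, geg n i (∑ j, v a j * v b j) := by
    conv_lhs => rw [hh]
    rw [← hh, map_sum, Finset.sum_comm, Finset.mul_sum]
    refine Finset.sum_congr rfl fun b _ => ?_
    rw [H _ h hhom hl, hh, map_sum]
    congr 1
    exact Finset.sum_congr rfl fun a _ => eval_Z _ _ (hv b) i
  have := B_nonneg h
  rw [h1] at this
  exact nonneg_of_mul_nonneg_right this hκ

end LPB

namespace LPB
open MvPolynomial Metric

variable {n : ℕ}

/-- evaluation on Euclidean space -/
noncomputable def ev (p : MvPolynomial (Fin n) ℝ) (y : EuclideanSpace ℝ (Fin n)) : ℝ :=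
  eval (fun i => y i) p

lemma ev_hasFDeriv (p : MvPolynomial (Fin n) ℝ) (y : EuclideanSpace ℝ (Fin n)) :
    HasFDerivAt (ev p) (∑ j, ev (pderiv j p) y • EuclideanSpace.proj (𝕜 := ℝ) j) y := by
  classical
  induction p using MvPolynomial.induction_on with
  | C a =>
    have : ev (n := n) (C a) = fun _ => a := by ext; simp [ev]
    rw [this]
    convert hasFDerivAt_const a y using 1
    simp [ev]
  | add p q hp hq =>
    have : ev (p + q) = fun y => ev p y + ev q y := by ext; simp [ev]
    rw [this]
    refine (hp.add hq).congr_fderiv ?_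
    simp [ev, add_smul, Finset.sum_add_distrib]
  | mul_X p i hp =>
    have : ev (p * X i) = fun y => ev p y * EuclideanSpace.proj (𝕜 := ℝ) i y := by ext; simp [ev]
    rw [this]
    refine (hp.mul ((EuclideanSpace.proj (𝕜 := ℝ) i).hasFDerivAt (x := y))).congr_fderiv ?_
    symm
    ext v
    simp only [ev, pderiv_mul, pderiv_X, map_add, map_mul, eval_X, add_smul,
      Finset.sum_add_distrib, Finset.smul_sum, _root_.add_apply,
      _root_.sum_apply, _root_.smul_apply, Pi.single_apply, smul_eq_mul,
      PiLp.proj_apply]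
    rw [add_comm]
    congr 1
    · rw [Finset.sum_eq_single i]
      · simp
      · intro b _ hb; simp [hb.symm]
      · simp
    · exact Finset.sum_congr rfl fun j _ => by ring

lemma ev_cont (p : MvPolynomial (Fin n) ℝ) : Continuous (ev p) :=
  continuous_iff_continuousAt.2 fun y => (ev_hasFDeriv p y).continuousAt

lemma ev_smul {k : ℕ} {p : MvPolynomial (Fin n) ℝ} (h : p.IsHomogeneous k) (r : ℝ)
    (y : EuclideanSpace ℝ (Fin n)) : ev p (r • y) = r ^ k * ev p y := by
  simp only [ev, eval_eq', Finset.mul_sum]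
  refine Finset.sum_congr rfl fun d hd => ?_
  have hk : ∑ j, d j = k := by
    have := h (mem_support_iff.1 hd)
    rw [← this, Finsupp.weight_apply, Finsupp.sum_fintype _ _ (by simp)]
    simp
  simp only [PiLp.smul_apply, smul_eq_mul, mul_pow, Finset.prod_mul_distrib]
  rw [Finset.prod_pow_eq_pow_sum, hk]
  ring

lemma hasDerivAt_sqmax (u : ℝ) : HasDerivAt (fun u : ℝ => max 0 u ^ 2) (2 * max 0 u) u := by
  rcases lt_trichotomy u 0 with h | rfl | h
  · rw [max_eq_left h.le, mul_zero]
    refine (hasDerivAt_const u (0:ℝ)).congr_of_eventuallyEq ?_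
    filter_upwards [eventually_lt_nhds h] with v hv
    rw [max_eq_left hv.le]; simp
  · rw [hasDerivAt_iff_isLittleO]
    simp only [max_self, mul_zero, smul_zero, sub_zero]
    have : (fun v : ℝ => v ^ 2) =o[nhds 0] fun v => v := by
      simpa using Asymptotics.isLittleO_pow_pow (𝕜 := ℝ) (m := 1) (n := 2) (by norm_num)
    refine Asymptotics.IsBigO.trans_isLittleO ?_ this
    refine Asymptotics.IsBigO.of_bound 1 (Filter.Eventually.of_forall fun v => ?_)
    rcases le_total v 0 with h | h
    · simp [max_eq_left h]; positivity
    · simp [max_eq_right h]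
  · rw [max_eq_right h.le]
    have : HasDerivAt (fun u : ℝ => u ^ 2) (2 * u) u := by simpa using hasDerivAt_pow 2 u
    refine this.congr_of_eventuallyEq ?_
    filter_upwards [eventually_gt_nhds h] with v hv
    rw [max_eq_right hv.le]

noncomputable def ψ (y : EuclideanSpace ℝ (Fin n)) : ℝ := max 0 (1 - ‖y‖ ^ 2)
noncomputable def φ (y : EuclideanSpace ℝ (Fin n)) : ℝ := ψ y ^ 2

lemma ψ_cont : Continuous (ψ (n := n)) := by unfold ψ; fun_prop

lemma ψ_supp : HasCompactSupport (ψ (n := n)) := by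
  refine HasCompactSupport.intro (isCompact_closedBall (0 : EuclideanSpace ℝ (Fin n)) 1) fun y hy => ?_
  have : 1 < ‖y‖ := by simpa using hy
  unfold ψ
  rw [max_eq_left]; nlinarith

lemma φ_hasFDeriv (y : EuclideanSpace ℝ (Fin n)) :
    HasFDerivAt (φ (n := n))
      ((2 * ψ y) • (-(2 • innerSL ℝ y) : EuclideanSpace ℝ (Fin n) →L[ℝ] ℝ)) y := by
  have h1 : HasFDerivAt (fun y : EuclideanSpace ℝ (Fin n) => 1 - ‖y‖ ^ 2) (-(2 • innerSL ℝ y)) y :=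
    (hasStrictFDerivAt_norm_sq y).hasFDerivAt.const_sub 1
  exact (hasDerivAt_sqmax (1 - ‖y‖ ^ 2)).comp_hasFDerivAt y h1

lemma ev_fderiv_single (p : MvPolynomial (Fin n) ℝ) (y : EuclideanSpace ℝ (Fin n)) (j : Fin n) :
    fderiv ℝ (ev p) y (EuclideanSpace.single j 1) = ev (pderiv j p) y := by
  classical
  rw [(ev_hasFDeriv p y).fderiv]
  simp

lemma φ_fderiv_single (y : EuclideanSpace ℝ (Fin n)) (j : Fin n) :
    fderiv ℝ (φ (n := n)) y (EuclideanSpace.single j 1) = -4 * (ψ y * y j) := by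
  classical
  rw [(φ_hasFDeriv y).fderiv]
  simp [EuclideanSpace.inner_single_right]
  ring

lemma parts (p : MvPolynomial (Fin n) ℝ) (j : Fin n) :
    ∫ y, φ y * ev (pderiv j p) y = 4 * ∫ y, ψ y * (y j * ev p y) := by
  have hφc : Continuous (φ (n := n)) := ψ_cont.pow 2
  have hφs : HasCompactSupport (φ (n := n)) := by
    have := ψ_supp (n := n)
    exact this.comp_left (g := fun t : ℝ => t ^ 2) (by simp)
  have hj : Continuous fun y : EuclideanSpace ℝ (Fin n) => y j := by fun_prop
  have key := integral_mul_fderiv_eq_neg_fderiv_mul_of_integrable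
    (μ := (volume : Measure (EuclideanSpace ℝ (Fin n)))) (f := φ (n := n)) (g := ev p)
    (v := EuclideanSpace.single j 1) ?_ ?_ ?_ ?_ ?_
  · simp only [ev_fderiv_single, φ_fderiv_single] at key
    rw [key, ← integral_neg, ← integral_const_mul]
    refine integral_congr_ae (Filter.Eventually.of_forall fun y => ?_)
    simp only []
    ring
  · simp only [φ_fderiv_single]
    refine Continuous.integrable_of_hasCompactSupport (((ψ_cont.mul hj).const_mul _).mul (ev_cont p)) ?_
    exact ((ψ_supp.mul_right).mul_left).mul_right
  · simp only [ev_fderiv_single]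
    exact Continuous.integrable_of_hasCompactSupport (hφc.mul (ev_cont _)) hφs.mul_right
  · exact Continuous.integrable_of_hasCompactSupport (hφc.mul (ev_cont _)) hφs.mul_right
  · exact fun y _ => (φ_hasFDeriv y).differentiableAt
  · exact fun y _ => (ev_hasFDeriv p y).differentiableAt

lemma int_ψ (k : ℕ) (hk : 1 ≤ k) (p : MvPolynomial (Fin n) ℝ) (hp : p.IsHomogeneous k)
    (hl : lap p = 0) : ∫ y, ψ y * ev p y = 0 := by
  have hφc : Continuous (φ (n := n)) := ψ_cont.pow 2
  have hφs : HasCompactSupport (φ (n := n)) := by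
    have := ψ_supp (n := n)
    exact this.comp_left (g := fun t : ℝ => t ^ 2) (by simp)
  have h1 : ∑ j, ∫ y, φ y * ev (pderiv j (pderiv j p)) y = 0 := by
    rw [← integral_finsetSum]
    · have : ∀ y, ∑ j, φ y * ev (pderiv j (pderiv j p)) y = 0 := fun y => by
        rw [← Finset.mul_sum]
        have := congrArg (fun q => ev q y) hl
        simp only [lap, ev, map_sum, map_zero] at this
        simp [ev, this]
      simp [this]
    · exact fun j _ => Continuous.integrable_of_hasCompactSupport (hφc.mul (ev_cont _)) hφs.mul_right
  simp only [parts] at h1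
  rw [← Finset.mul_sum, ← integral_finsetSum] at h1
  · have : ∀ y, ∑ j, ψ y * (y j * ev (pderiv j p) y) = k * (ψ y * ev p y) := fun y => by
      rw [← Finset.mul_sum]
      have := congrArg (fun q => ev q y) hp.sum_X_mul_pderiv
      simp only [ev, map_sum, map_mul, eval_X, nsmul_eq_mul, map_natCast] at this
      simp only [ev, this]; ring
    simp only [this, integral_const_mul] at h1
    have hk' : (k : ℝ) ≠ 0 := by positivity
    simpa [hk'] using h1
  · have hj : ∀ j : Fin n, Continuous fun y : EuclideanSpace ℝ (Fin n) => y j := by fun_prop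
    exact fun j _ => Continuous.integrable_of_hasCompactSupport
      (ψ_cont.mul ((hj j).mul (ev_cont _))) ψ_supp.mul_right

lemma polar [Nontrivial (EuclideanSpace ℝ (Fin n))] (k : ℕ) (F : EuclideanSpace ℝ (Fin n) → ℝ)
    (hF : ∀ r : ℝ, 0 < r → ∀ y, F (r • y) = r ^ k * F y) :
    ∫ y, ψ y * F y = (∫ u, F (u : EuclideanSpace ℝ (Fin n)) ∂((volume : Measure (EuclideanSpace ℝ (Fin n))).toSphere)) *
      ∫ r, (max 0 (1 - (r : ℝ) ^ 2) * (r : ℝ) ^ k) ∂(Measure.volumeIoiPow (Module.finrank ℝ (EuclideanSpace ℝ (Fin n)) - 1)) := by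
  rw [← integral_prod_mul (fun u : sphere (0 : EuclideanSpace ℝ (Fin n)) 1 => F u)
    (fun r : Set.Ioi (0:ℝ) => (max 0 (1 - (r : ℝ) ^ 2) * (r : ℝ) ^ k))]
  rw [← (volume : Measure (EuclideanSpace ℝ (Fin n))).measurePreserving_homeomorphUnitSphereProd.integral_comp
    (Homeomorph.measurableEmbedding _)]
  have h0 : ∫ y, ψ y * F y = ∫ y in ({0}ᶜ : Set (EuclideanSpace ℝ (Fin n))), ψ y * F y := by
    rw [restrict_compl_singleton]
  rw [h0, ← integral_subtype_comap (measurableSet_singleton _).compl fun y => ψ y * F y]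
  refine integral_congr_ae (Filter.Eventually.of_forall fun y => ?_)
  have hy : (0 : ℝ) < ‖(y : EuclideanSpace ℝ (Fin n))‖ := norm_pos_iff.2 y.2
  have := hF _ hy (‖(y : EuclideanSpace ℝ (Fin n))‖⁻¹ • (y : EuclideanSpace ℝ (Fin n)))
  rw [smul_inv_smul₀ hy.ne'] at this
  simp only [homeomorphUnitSphereProd_apply_fst_coe, homeomorphUnitSphereProd_apply_snd_coe, this, ψ]
  ring

lemma sphere_int (hn : 2 ≤ n) (k : ℕ) (hk : 1 ≤ k) (p : MvPolynomial (Fin n) ℝ)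
    (hp : p.IsHomogeneous k) (hl : lap p = 0) :
    ∫ x, eval (fun i => (x : EuclideanSpace ℝ (Fin n)) i) p ∂(sphereMeasure n) = 0 := by
  have : Nonempty (Fin n) := ⟨⟨0, by omega⟩⟩
  have : Nontrivial (EuclideanSpace ℝ (Fin n)) := inferInstance
  have h1 := polar k (ev p) (fun r _ y => ev_smul hp r y)
  have h2 := polar k (fun y : EuclideanSpace ℝ (Fin n) => ‖y‖ ^ k)
    (fun r hr y => by rw [norm_smul, mul_pow, Real.norm_of_nonneg hr.le])
  rw [int_ψ k hk p hp hl] at h1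
  have h3 : 0 < ∫ y : EuclideanSpace ℝ (Fin n), ψ y * ‖y‖ ^ k := by
    refine Continuous.integral_pos_of_hasCompactSupport_nonneg_nonzero 
      (x := EuclideanSpace.single ⟨0, by omega⟩ (1 / 2 : ℝ)) (ψ_cont.mul (by fun_prop)) ψ_supp.mul_right ?_ ?_
    · intro y
      exact mul_nonneg (le_max_left _ _) (by positivity)
    · have : (‖EuclideanSpace.single (⟨0, by omega⟩ : Fin n) (1 / 2 : ℝ)‖) = 1 / 2 := by
        simp
      simp only [ψ, this]
      have h : max (0:ℝ) (1 - (1/2) ^ 2) = 3 / 4 := by norm_num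
      rw [h]; positivity
  rw [h2] at h3
  have h4 := right_ne_zero_of_mul h3.ne'
  have h5 := (mul_eq_zero.1 h1.symm).resolve_right h4
  rw [sphereMeasure, integral_smul_measure]
  unfold ev at h5
  rw [h5, smul_zero]

end LPB

theorem LP_bound_spherical_designs (n τ : ℕ) (hn : 2 ≤ n) (hτ : 1 ≤ τ)
    (f : ℝ → ℝ) (m : ℕ) (c : ℕ → ℝ)
    (hf : ∀ t : ℝ, f t = ∑ i ∈ Finset.range (m + 1), c i * geg n i t)
    (hB1 : ∀ t ∈ Set.Icc (-1 : ℝ) 1, 0 ≤ f t)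
    (hB2a : 0 < c 0) (hB2b : ∀ i : ℕ, τ < i → i ≤ m → c i ≤ 0)
    (C : Finset (Metric.sphere (0 : EuclideanSpace ℝ (Fin n)) 1)) (hC : C.Nonempty)
    (hdesign : IsSphericalDesign n τ C) :
    f 1 / c 0 ≤ (C.card : ℝ) := by
  classical
  set v : Metric.sphere (0 : EuclideanSpace ℝ (Fin n)) 1 → Fin n → ℝ :=
    fun x i => (x : EuclideanSpace ℝ (Fin n)) i with hvdef
  have hv : ∀ x, ∑ j, v x j ^ 2 = 1 := fun x => by
    have h : ‖(x : EuclideanSpace ℝ (Fin n))‖ ^ 2 = 1 := by simp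
    rw [EuclideanSpace.real_norm_sq_eq] at h
    exact h
  have hcs : ∀ x y, ∑ j, v x j * v y j ∈ Set.Icc (-1 : ℝ) 1 := fun x y => by
    have h1 : 0 ≤ ∑ j, (v x j - v y j) ^ 2 := Finset.sum_nonneg fun _ _ => sq_nonneg _
    have h2 : 0 ≤ ∑ j, (v x j + v y j) ^ 2 := Finset.sum_nonneg fun _ _ => sq_nonneg _
    have e1 : ∑ j, (v x j - v y j) ^ 2 = ∑ j, v x j ^ 2 + ∑ j, v y j ^ 2 - 2 * ∑ j, v x j * v y j := by
      rw [Finset.mul_sum, ← Finset.sum_add_distrib, ← Finset.sum_sub_distrib]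
      exact Finset.sum_congr rfl fun j _ => by ring
    have e2 : ∑ j, (v x j + v y j) ^ 2 = ∑ j, v x j ^ 2 + ∑ j, v y j ^ 2 + 2 * ∑ j, v x j * v y j := by
      rw [Finset.mul_sum, ← Finset.sum_add_distrib, ← Finset.sum_add_distrib]
      exact Finset.sum_congr rfl fun j _ => by ring
    rw [e1, hv, hv] at h1
    rw [e2, hv, hv] at h2
    constructor <;> linarith
  have hcard : (0 : ℝ) < C.card := by exact_mod_cast hC.card_pos
  set M : ℕ → ℝ := fun i => ∑ x ∈ C, ∑ y ∈ C, geg n i (∑ j, v x j * v y j) with hM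
  have hM0 : M 0 = (C.card : ℝ) ^ 2 := by
    simp [hM, geg, pow_two]
  have hMpos : ∀ i, 0 ≤ M i := fun i => LPB.posdef hn i C v hv
  have hMz : ∀ i, 1 ≤ i → i ≤ τ → M i = 0 := fun i h1 h2 => by
    refine Finset.sum_eq_zero fun x _ => ?_
    have hd := hdesign (LPB.Z n (v x) i) ((LPB.hom_Z (v x) i).totalDegree_le.trans h2)
    rw [LPB.sphere_int hn i h1 _ (LPB.hom_Z (v x) i) (LPB.lap_Z hn _ (hv x) i)] at hd
    have h3 := (div_eq_zero_iff.1 hd).resolve_right hcard.ne'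
    rw [← h3]
    exact Finset.sum_congr rfl fun y _ => (LPB.eval_Z (v x) (v y) (hv y) i).symm
  have hS : ∑ x ∈ C, ∑ y ∈ C, f (∑ j, v x j * v y j) = ∑ i ∈ Finset.range (m + 1), c i * M i := by
    simp only [hf, hM, Finset.mul_sum]
    rw [Finset.sum_comm (s := Finset.range (m + 1))]
    refine Finset.sum_congr rfl fun x _ => ?_
    rw [Finset.sum_comm]
  have hlow : (C.card : ℝ) * f 1 ≤ ∑ x ∈ C, ∑ y ∈ C, f (∑ j, v x j * v y j) := by
    rw [← nsmul_eq_mul]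
    refine Finset.card_nsmul_le_sum _ _ _ fun x hx => ?_
    have h1 : f 1 = f (∑ j, v x j * v x j) := by
      have := hv x
      simp only [pow_two] at this
      rw [this]
    rw [h1]
    exact Finset.single_le_sum (f := fun y => f (∑ j, v x j * v y j))
      (fun y _ => hB1 _ (hcs x y)) hx
  have hup : ∑ i ∈ Finset.range (m + 1), c i * M i ≤ c 0 * (C.card : ℝ) ^ 2 := by
    rw [Finset.sum_range_succ', ← hM0]
    have : ∑ k ∈ Finset.range m, c (k + 1) * M (k + 1) ≤ 0 := by
      refine Finset.sum_nonpos fun k hk => ?_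
      have hk' := Finset.mem_range.1 hk
      by_cases h : k + 1 ≤ τ
      · rw [hMz _ (by omega) h, mul_zero]
      · exact mul_nonpos_of_nonpos_of_nonneg (hB2b _ (by omega) (by omega)) (hMpos _)
    linarith
  rw [div_le_iff₀ hB2a]
  have h := hlow.trans (hS.trans_le hup)
  have : (C.card : ℝ) * f 1 ≤ C.card * (C.card * c 0) := by nlinarith
  exact le_of_mul_le_mul_left this hcard
end
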